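/- For every n ≥ 1, every family A = (A^1, …, A^n) of complex I₁×l matrices and every family B = (B^1, …, B^n) of complex l×I₂ matrices, btph(A) · btph(B) = btph(C), where C = (C^1, …, C^n) is the unique family of complex I₁×I₂ matrices satisfying Ĉ^p = Â^p · B̂^p for all 1 ≤ p ≤ n, with X̂^p = ∑_{q=1}^n (M_n)_{p,q} X^q denoting the cosine-transformed slices (uniqueness holds since M_n is invertible). -/

import Mathlib

open Matrix

noncomputable section

/-- The discrete cosine transform (DCT) matrix `C_n`. -/
def dctMatrix (n : ℕ) : Matrix (Fin n) (Fin n) ℝ :=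
  Matrix.of fun i j =>
    Real.sqrt ((2 - if (i : ℕ) = 0 then (1 : ℝ) else 0) / n) *
      Real.cos ((i : ℕ) * (2 * (j : ℕ) + 1) * Real.pi / (2 * n))

/-- Toeplitz-plus-Hankel selector (0-based indexing). -/
def thSelect {m : ℕ} {β : Type*} [AddCommMonoid β] (B : Fin m → β) (i j : Fin m) : β :=
  B ⟨(((i : ℕ) : ℤ) - ((j : ℕ) : ℤ)).natAbs, by
      have hi := i.isLt; have hj := j.isLt; omega⟩ +
  (if h1 : (i : ℕ) + (j : ℕ) + 2 ≤ m then
      B ⟨(i : ℕ) + (j : ℕ) + 1, by omega⟩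
   else if h2 : (i : ℕ) + (j : ℕ) + 2 = m + 1 then 0
   else
      B ⟨2 * m - 1 - ((i : ℕ) + (j : ℕ)), by
        have hi := i.isLt; have hj := j.isLt; omega⟩)

/-- The block Toeplitz-plus-Hankel matrix `btph(A)` of a family of `I₁×I₂` matrices. -/
def btph {n I₁ I₂ : ℕ} (A : Fin n → Matrix (Fin I₁) (Fin I₂) ℂ) :
    Matrix (Fin n × Fin I₁) (Fin n × Fin I₂) ℂ :=
  Matrix.of fun p q => thSelect A p.1 q.1 p.2 q.2

/-- `W_n`: the diagonal matrix whose diagonal is the first column of `C_n`. -/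
def Wmat (n : ℕ) : Matrix (Fin n) (Fin n) ℝ :=
  Matrix.diagonal fun i => dctMatrix n i ⟨0, i.pos⟩

/-- `Z_n`: the upshift matrix. -/
def Zmat (n : ℕ) : Matrix (Fin n) (Fin n) ℝ :=
  Matrix.of fun i j => if (i : ℕ) + 1 = (j : ℕ) then 1 else 0

/-- `M_n = W_n⁻¹ C_n (I_n + Z_n)`. -/
def Mmat (n : ℕ) : Matrix (Fin n) (Fin n) ℝ :=
  (Wmat n)⁻¹ * dctMatrix n * (1 + Zmat n)

/-- The cosine-transformed slices `X̂^p = ∑_q (M_n)_{p,q} X^q` of a family of matrices. -/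
def cosHat {n I₁ I₂ : ℕ} (X : Fin n → Matrix (Fin I₁) (Fin I₂) ℂ) :
    Fin n → Matrix (Fin I₁) (Fin I₂) ℂ :=
  fun p => ∑ q, ((Mmat n p q : ℝ) : ℂ) • X q

/-!
As a function of `j ∈ ℤ`, `w p j = cos (p (2j + 1) π / (2n))` is symmetric about `-1/2` and about
`n - 1/2`. Summing a Toeplitz-plus-Hankel matrix against `w p` is therefore the same as
summing symmetric shifts `w p (i + q) + w p (i - q)`, which are multiples of `w p i`. So every
`btph X` acts on `w p ⊗ v` as `w p ⊗ v ↦ w p ⊗ X̂^p v`; the eigenvalues are the entries of `M_n`, as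
one sees by evaluating at `i = 0`. Since `w p j` is the Chebyshev polynomial `T_p` evaluated at
distinct nodes, the vectors `w p` span `ℝⁿ`, and a block matrix is determined by this action.
-/

section HalfSampleSymmetry

variable {R : Type*} {n : ℕ}

/-- A sequence on `ℤ` which is symmetric about the half-integers `-1/2` and `n - 1/2`. Such
sequences are the extensions of vectors indexed by `0, …, n - 1` underlying the DCT of type II. -/
structure HalfSampleSymmetric (n : ℕ) (w : ℤ → R) : Prop where
  neg_one_sub : ∀ k, w (-1 - k) = w k
  two_mul_sub_one_sub : ∀ k, w (2 * n - 1 - k) = w k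

/-- The reflection of an index in the window `-n ≤ k < 2n` into `0, …, n - 1`, about whichever of
`-1/2` and `n - 1/2` is needed. -/
def reflect (n : ℕ) (k : ℤ) : ℤ :=
  if k < 0 then -1 - k else if k < n then k else 2 * n - 1 - k

theorem HalfSampleSymmetric.apply_reflect {w : ℤ → R} (hw : HalfSampleSymmetric n w) (k : ℤ) :
    w (reflect n k) = w k := by
  unfold reflect
  split_ifs
  exacts [hw.neg_one_sub k, rfl, hw.two_mul_sub_one_sub k]

theorem reflect_nonneg {k : ℤ} (hk : k < 2 * n) : 0 ≤ reflect n k := by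
  unfold reflect; split_ifs <;> omega

theorem reflect_lt {k : ℤ} (hk : -n ≤ k) : reflect n k < n := by
  unfold reflect; split_ifs <;> omega

/-- The sum of the two shifts of `w` by `±q`, counted once when they coincide because `q = 0`. -/
def symmShift [Add R] (w : ℤ → R) (q i : ℤ) : R :=
  if q = 0 then w i else w (i + q) + w (i - q)

theorem HalfSampleSymmetric.sum_mul_ite_eq_reflect [NonAssocSemiring R] {w : ℤ → R}
    (hw : HalfSampleSymmetric n w) {k : ℤ} (hk : -n ≤ k) (hk' : k < 2 * n) :
    ∑ j : Fin n, w j * (if (j : ℤ) = reflect n k then 1 else 0) = w k := by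
  lift reflect n k to ℕ using reflect_nonneg hk' with r hr
  have hrn : r < n := by have := reflect_lt hk; omega
  rw [Finset.sum_eq_single ⟨r, hrn⟩]
  · simp [hr, hw.apply_reflect]
  · intro j _ hj
    have : (j : ℕ) ≠ r := fun h => hj (Fin.ext h)
    simp [this]
  · simp

end HalfSampleSymmetry

section ToeplitzPlusHankel

variable {R β : Type*} {n : ℕ}

theorem thSelect_eq_sum_smul (R : Type*) [Semiring R] [AddCommMonoid β] [Module R β]
    (X : Fin n → β) (i j : Fin n) :
    thSelect X i j = ∑ q, thSelect (Pi.single q (1 : R)) i j • X q := by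
  unfold thSelect
  split_ifs <;> simp [add_smul, Finset.sum_add_distrib, Pi.single_apply]

theorem thSelect_single_one [AddCommMonoidWithOne R] (q i j : Fin n) :
    thSelect (Pi.single q (1 : R)) i j =
      if (q : ℕ) = 0 then if j = i then 1 else 0
      else (if (j : ℤ) = reflect n (i + q) then 1 else 0) +
        (if (j : ℤ) = reflect n (i - q) then 1 else 0) := by
  have h_up : (j : ℤ) = reflect n (i + q) ↔ (j : ℤ) = i + q ∨ (j : ℤ) = 2 * n - 1 - (i + q) := by
    unfold reflect; grind
  have h_down : (j : ℤ) = reflect n (i - q) ↔ (j : ℤ) = i - q ∨ (j : ℤ) = -1 - (i - q) := by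
    unfold reflect; grind
  simp only [thSelect, Pi.single_apply, Fin.ext_iff, h_up, h_down]
  split_ifs <;> first | omega | simp

theorem HalfSampleSymmetric.sum_mul_thSelect_single [NonAssocSemiring R] {w : ℤ → R}
    (hw : HalfSampleSymmetric n w) (q i : Fin n) :
    ∑ j : Fin n, w j * thSelect (Pi.single q (1 : R)) i j = symmShift w q i := by
  unfold symmShift
  simp only [thSelect_single_one, Nat.cast_eq_zero]
  split_ifs with hq
  · simp
  · simp only [mul_add, Finset.sum_add_distrib]
    rw [hw.sum_mul_ite_eq_reflect (by omega) (by omega),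
      hw.sum_mul_ite_eq_reflect (by omega) (by omega)]

theorem HalfSampleSymmetric.sum_smul_thSelect [Semiring R] [AddCommMonoid β] [Module R β]
    {w : ℤ → R} (hw : HalfSampleSymmetric n w) (X : Fin n → β) (i : Fin n) :
    ∑ j : Fin n, w j • thSelect X i j = ∑ q : Fin n, symmShift w q i • X q := by
  simp_rw [thSelect_eq_sum_smul R X, Finset.smul_sum, smul_smul]
  rw [Finset.sum_comm]
  simp_rw [← Finset.sum_smul, hw.sum_mul_thSelect_single]

end ToeplitzPlusHankel

section CosineModes

/-- The angle `(2j + 1) π / (2n)`; for `0 ≤ j < n` its cosine is a root of the Chebyshev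
polynomial `T_n`. -/
def cosAngle (n : ℕ) (j : ℤ) : ℝ :=
  (2 * j + 1) * Real.pi / (2 * n)

/-- The `p`-th cosine mode `cos (p (2j + 1) π / (2n))`, that is, the `p`-th row of the DCT matrix
without its normalization, extended to all integers `j`. -/
def cosMode (n p : ℕ) (j : ℤ) : ℝ :=
  Real.cos (p * cosAngle n j)

theorem halfSampleSymmetric_cosMode {n : ℕ} (hn : n ≠ 0) (p : ℕ) :
    HalfSampleSymmetric n (cosMode n p) where
  neg_one_sub k := by
    have : cosAngle n (-1 - k) = -cosAngle n k := by
      unfold cosAngle; push_cast; ring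
    rw [cosMode, this, mul_neg, Real.cos_neg, cosMode]
  two_mul_sub_one_sub k := by
    have : cosAngle n (2 * n - 1 - k) = 2 * Real.pi - cosAngle n k := by
      unfold cosAngle; push_cast; field
    rw [cosMode, this, mul_sub, Real.cos_nat_mul_two_pi_sub, cosMode]

theorem cosMode_add_add_cosMode_sub (n p : ℕ) (i q : ℤ) :
    cosMode n p (i + q) + cosMode n p (i - q) =
      2 * Real.cos (p * (q * Real.pi / n)) * cosMode n p i := by
  have h_add : cosAngle n (i + q) = cosAngle n i + q * Real.pi / n := by
    unfold cosAngle; push_cast; ring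
  have h_sub : cosAngle n (i - q) = cosAngle n i - q * Real.pi / n := by
    unfold cosAngle; push_cast; ring
  simp only [cosMode, h_add, h_sub, mul_add, mul_sub, Real.cos_add, Real.cos_sub]
  ring

theorem exists_symmShift_cosMode_eq_mul (n p : ℕ) (q : ℤ) :
    ∃ c, ∀ i, symmShift (cosMode n p) q i = c * cosMode n p i := by
  unfold symmShift
  split_ifs
  · exact ⟨1, fun i => (one_mul _).symm⟩
  · exact ⟨_, fun i => cosMode_add_add_cosMode_sub n p i q⟩

theorem cosMode_zero_pos {n p : ℕ} (hp : p < n) : 0 < cosMode n p 0 := by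
  have hn : (0 : ℝ) < n := by exact_mod_cast p.zero_le.trans_lt hp
  have hlt : (p : ℝ) * cosAngle n 0 < Real.pi / 2 := by
    have : (p : ℝ) / n < 1 := (div_lt_one hn).2 (by exact_mod_cast hp)
    calc (p : ℝ) * cosAngle n 0 = p / n * (Real.pi / 2) := by simp [cosAngle]; field
      _ < Real.pi / 2 := mul_lt_of_lt_one_left (by positivity) this
  have hnonneg : 0 ≤ (p : ℝ) * cosAngle n 0 := by simp only [cosAngle, Int.cast_zero]; positivity
  exact Real.cos_pos_of_mem_Ioo ⟨by linarith [Real.pi_pos], hlt⟩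

theorem cosAngle_mem_Icc {n : ℕ} (j : Fin n) : cosAngle n j ∈ Set.Icc 0 Real.pi := by
  have hn : (0 : ℝ) < n := by exact_mod_cast j.pos
  have hj : (j : ℝ) + 1 ≤ n := by exact_mod_cast j.isLt
  have h : (2 * (j : ℝ) + 1) / (2 * n) ≤ 1 := (div_le_one (by positivity)).2 (by linarith)
  simp only [cosAngle, Int.cast_natCast, mul_div_right_comm]
  exact ⟨by positivity, mul_le_of_le_one_left Real.pi_nonneg h⟩

theorem injective_cos_cosAngle (n : ℕ) :
    Function.Injective fun j : Fin n => Real.cos (cosAngle n j) := by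
  intro j k hjk
  have hn : (n : ℝ) ≠ 0 := by exact_mod_cast j.pos.ne'
  have h : cosAngle n j = cosAngle n k :=
    Real.injOn_cos (cosAngle_mem_Icc j) (cosAngle_mem_Icc k) hjk
  simpa [cosAngle, hn, Real.pi_ne_zero, Fin.ext_iff] using h

theorem span_range_eval_sequence_eq_top {K : Type*} [Field K] {n : ℕ} (S : Polynomial.Sequence K)
    {x : Fin n → K} (hx : Function.Injective x) :
    Submodule.span K (Set.range fun p : Fin n => fun j => (S p).eval (x j)) = ⊤ := by
  let evalNodes : Polynomial K →ₗ[K] Fin n → K := LinearMap.pi fun j => Polynomial.leval (x j)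
  have h_range : (Set.range fun p : Fin n => fun j => (S p).eval (x j)) =
      evalNodes '' (S '' Set.Iio n) := by
    rw [← Fin.range_val, ← Set.range_comp, ← Set.range_comp]
    rfl
  rw [h_range, Submodule.span_image, S.span_degreeLT fun i _ => by simp, eq_top_iff]
  intro f _
  refine ⟨Lagrange.interpolate Finset.univ x f, ?_, ?_⟩
  · simpa [Polynomial.mem_degreeLT] using
      Lagrange.degree_interpolate_lt (s := Finset.univ) f hx.injOn
  · ext j
    exact Lagrange.eval_interpolate_at_node f hx.injOn (Finset.mem_univ j)

theorem span_range_cosMode_eq_top (n : ℕ) :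
    Submodule.span ℝ (Set.range fun p : Fin n => fun j : Fin n => cosMode n p j) = ⊤ := by
  have h := span_range_eval_sequence_eq_top (Polynomial.Chebyshev.chebyshevTsequence ℝ)
    (injective_cos_cosAngle n)
  simpa [Polynomial.Chebyshev.chebyshevTsequence, cosMode] using h

end CosineModes

section CosineTransform

variable {n : ℕ}

/-- The normalization of the `i`-th row of the DCT matrix. -/
def dctScale (i : Fin n) : ℝ :=
  Real.sqrt ((2 - if (i : ℕ) = 0 then (1 : ℝ) else 0) / n)

theorem dctScale_pos (i : Fin n) : 0 < dctScale i := by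
  have hn : (0 : ℝ) < n := by exact_mod_cast i.pos
  refine Real.sqrt_pos.2 (div_pos ?_ hn)
  split_ifs <;> norm_num

theorem dctMatrix_apply (i j : Fin n) :
    dctMatrix n i j = dctScale i * cosMode n i j := by
  simp [dctMatrix, dctScale, cosMode, cosAngle, mul_assoc, mul_div_assoc]

theorem isUnit_det_Wmat (n : ℕ) : IsUnit (Wmat n).det := by
  rw [Wmat, Matrix.det_diagonal, isUnit_iff_ne_zero]
  exact Finset.prod_ne_zero_iff.2 fun i _ => by
    rw [dctMatrix_apply]
    exact (mul_pos (dctScale_pos i) (cosMode_zero_pos i.isLt)).ne'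

theorem mul_Zmat_apply {m : Type*} (N : Matrix m (Fin n) ℝ) (i : m) (j : Fin n) :
    (N * Zmat n) i j =
      if (j : ℕ) = 0 then 0 else N i ⟨j - 1, (Nat.sub_le _ _).trans_lt j.isLt⟩ := by
  simp only [Matrix.mul_apply, Zmat, Matrix.of_apply]
  split_ifs with hj
  · simp [hj]
  · have h_iff (k : Fin n) :
        (k : ℕ) + 1 = j ↔ k = ⟨j - 1, (Nat.sub_le _ _).trans_lt j.isLt⟩ := by
      rw [Fin.ext_iff]; lia
    simp [h_iff]

theorem dctMatrix_mul_one_add_Zmat_apply (p q : Fin n) :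
    (dctMatrix n * (1 + Zmat n)) p q = dctScale p * symmShift (cosMode n p) q 0 := by
  rw [Matrix.mul_add, Matrix.mul_one, Matrix.add_apply, mul_Zmat_apply]
  simp only [dctMatrix_apply, symmShift, Nat.cast_eq_zero]
  split_ifs with hq
  · simp [hq]
  · have h_neg : cosMode n p (0 - q) = cosMode n p ((q - 1 : ℕ) : ℤ) := by
      rw [← (halfSampleSymmetric_cosMode p.pos.ne' p).neg_one_sub]
      congr 1
      lia
    rw [zero_add, h_neg, mul_add]

theorem Mmat_mul_cosMode_zero (p q : Fin n) :
    Mmat n p q * cosMode n p 0 = symmShift (cosMode n p) q 0 := by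
  have h : (Wmat n * Mmat n) p q = (dctMatrix n * (1 + Zmat n)) p q := by
    rw [Mmat, Matrix.mul_assoc, Matrix.mul_nonsing_inv_cancel_left _ _ (isUnit_det_Wmat n)]
  rw [Wmat, Matrix.diagonal_mul, dctMatrix_mul_one_add_Zmat_apply, dctMatrix_apply, mul_assoc,
    Nat.cast_zero] at h
  rw [mul_comm]
  exact mul_left_cancel₀ (dctScale_pos p).ne' h

theorem symmShift_cosMode (p q : Fin n) (i : ℤ) :
    symmShift (cosMode n p) q i = Mmat n p q * cosMode n p i := by
  obtain ⟨c, hc⟩ := exists_symmShift_cosMode_eq_mul n p q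
  have : Mmat n p q = c :=
    mul_right_cancel₀ (cosMode_zero_pos p.isLt).ne' ((Mmat_mul_cosMode_zero p q).trans (hc 0))
  rw [hc, this]

theorem sum_cosMode_smul_thSelect {I₁ I₂ : ℕ} (X : Fin n → Matrix (Fin I₁) (Fin I₂) ℂ)
    (p i : Fin n) :
    ∑ j : Fin n, cosMode n p j • thSelect X i j = cosMode n p i • cosHat X p := by
  rw [(halfSampleSymmetric_cosMode p.pos.ne' p).sum_smul_thSelect]
  simp only [cosHat, symmShift_cosMode, Complex.coe_smul, Finset.smul_sum, smul_smul, mul_comm]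

end CosineTransform

section TensorVectors

variable {R S m m' k k' l : Type*}

/-- The pure tensor `w ⊗ v` as a vector on the product index type; it is the vector whose `i`-th
block is `w i • v`. -/
def vecTensor [SMul R S] (w : m → R) (v : k → S) : m × k → S :=
  fun x => w x.1 • v x.2

theorem zero_vecTensor [Zero R] [Zero S] [SMulWithZero R S] (v : k → S) :
    vecTensor (0 : m → R) v = 0 := by
  ext x; exact zero_smul R (v x.2)

theorem add_vecTensor [Semiring R] [AddCommMonoid S] [Module R S] (w w' : m → R) (v : k → S) :
    vecTensor (w + w') v = vecTensor w v + vecTensor w' v := by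
  ext x; exact add_smul (w x.1) (w' x.1) (v x.2)

theorem smul_vecTensor [Monoid R] [MulAction R S] (c : R) (w : m → R) (v : k → S) :
    vecTensor (c • w) v = c • vecTensor w v := by
  ext x; exact mul_smul c (w x.1) (v x.2)

theorem vecTensor_single_one_single_one [Semiring R] [AddCommMonoid S] [One S] [Module R S]
    [DecidableEq m] [DecidableEq k] (x : m × k) :
    vecTensor (Pi.single x.1 (1 : R)) (Pi.single x.2 (1 : S)) = Pi.single x 1 := by
  ext y
  by_cases h₁ : y.1 = x.1 <;> by_cases h₂ : y.2 = x.2 <;>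
    simp [vecTensor, Pi.single_apply, Prod.ext_iff, h₁, h₂]

variable [CommSemiring R] [Semiring S] [Algebra R S]

theorem comp_mulVec_vecTensor [Fintype m'] [Fintype k'] (N : Matrix m m' (Matrix k k' S))
    (w : m' → R) (v : k' → S) (i : m) (a : k) :
    (Matrix.comp m m' k k' S N *ᵥ vecTensor w v) (i, a) = ((∑ j, w j • N i j) *ᵥ v) a := by
  simp_rw [Matrix.sum_mulVec, Matrix.smul_mulVec, Finset.sum_apply]
  simp only [Pi.smul_apply, Matrix.mulVec, dotProduct, Fintype.sum_prod_type,
    Matrix.comp_apply, vecTensor, mul_smul_comm, Finset.smul_sum]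

theorem ext_of_mulVec_vecTensor [Fintype m] [Fintype k] {ι : Type*} {w : ι → m → R}
    (hw : Submodule.span R (Set.range w) = ⊤) {M N : Matrix l (m × k) S}
    (h : ∀ p v, M *ᵥ vecTensor (w p) v = N *ᵥ vecTensor (w p) v) : M = N := by
  classical
  have h_all (u : m → R) (v : k → S) : M *ᵥ vecTensor u v = N *ᵥ vecTensor u v := by
    have hu : u ∈ Submodule.span R (Set.range w) := hw ▸ Submodule.mem_top
    induction hu using Submodule.span_induction with
    | mem u hu => obtain ⟨p, rfl⟩ := hu; exact h p v
    | zero => rw [zero_vecTensor, Matrix.mulVec_zero, Matrix.mulVec_zero]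
    | add u u' _ _ hu hu' => rw [add_vecTensor, Matrix.mulVec_add, Matrix.mulVec_add, hu, hu']
    | smul c u _ hu => rw [smul_vecTensor, Matrix.mulVec_smul, Matrix.mulVec_smul, hu]
  refine Matrix.ext_of_mulVec_single fun x => ?_
  rw [← vecTensor_single_one_single_one (R := R)]
  exact h_all _ _

end TensorVectors

theorem btph_mulVec_vecTensor_cosMode {n I₁ I₂ : ℕ} (X : Fin n → Matrix (Fin I₁) (Fin I₂) ℂ)
    (p : Fin n) (v : Fin I₂ → ℂ) :
    btph X *ᵥ vecTensor (fun j : Fin n => cosMode n p j) v =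
      vecTensor (fun j : Fin n => cosMode n p j) (cosHat X p *ᵥ v) := by
  have h_comp : btph X = Matrix.comp _ _ _ _ ℂ (Matrix.of (thSelect X)) := rfl
  ext ⟨i, a⟩
  simp only [h_comp, comp_mulVec_vecTensor, Matrix.of_apply, sum_cosMode_smul_thSelect,
    Matrix.smul_mulVec, Pi.smul_apply, vecTensor]

/-- If `C = (C^1, …, C^n)` is the (unique, since `M_n` is invertible) family with
`Ĉ^p = Â^p B̂^p` for all `p`, then `btph(A) · btph(B) = btph(C)`. -/
theorem btph_mul_btph (n I₁ l I₂ : ℕ) (hn : 1 ≤ n)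
    (A : Fin n → Matrix (Fin I₁) (Fin l) ℂ) (B : Fin n → Matrix (Fin l) (Fin I₂) ℂ)
    (C : Fin n → Matrix (Fin I₁) (Fin I₂) ℂ)
    (hC : ∀ p, cosHat C p = cosHat A p * cosHat B p) :
    btph A * btph B = btph C := by
  refine ext_of_mulVec_vecTensor (span_range_cosMode_eq_top n) fun p v => ?_
  rw [← Matrix.mulVec_mulVec, btph_mulVec_vecTensor_cosMode, btph_mulVec_vecTensor_cosMode,
    btph_mulVec_vecTensor_cosMode, hC, Matrix.mulVec_mulVec]
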